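/- For general points: ℓ(L(5e+2, 5e−5, 6^{2e})) = 5 − 2e for 1 ≤ e ≤ 2 (virtual dimension −2e − 5); ℓ(L(5e+3, 5e−4, 6^{2e})) = 9 − 2e for 1 ≤ e ≤ 4 (virtual dimension −2e + 3); ℓ(L(5e+4, 5e−3, 6^{2e})) = 14 − 2e for 1 ≤ e ≤ 7 (virtual dimension −2e + 11); and ℓ(L(5e+5, 5e−2, 6^{2e})) = 20 − 2e for 1 ≤ e ≤ 10 (virtual dimension −2e + 19); in particular all these systems are special. -/

import Mathlib

open MvPolynomial

/-- The iterated partial derivative corresponding to the multi-index `ν`. -/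
noncomputable def mderiv (ν : Fin 3 → ℕ) :
    MvPolynomial (Fin 3) ℂ →ₗ[ℂ] MvPolynomial (Fin 3) ℂ :=
  ((pderiv (R := ℂ) (0 : Fin 3)).toLinearMap ^ ν 0) ∘ₗ
  ((pderiv (R := ℂ) (1 : Fin 3)).toLinearMap ^ ν 1) ∘ₗ
  ((pderiv (R := ℂ) (2 : Fin 3)).toLinearMap ^ ν 2)

/-- The linear system `L(d; m)` of homogeneous forms of degree `d` in three variables
all of whose partial derivatives of order `< m i` vanish at the point `p i`,
i.e. plane curves of degree `d` with multiplicity at least `m i` at `p i`. -/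
noncomputable def linSys {k : ℕ} (p : Fin k → Fin 3 → ℂ) (d : ℕ) (m : Fin k → ℕ) :
    Submodule ℂ (MvPolynomial (Fin 3) ℂ) :=
  (homogeneousSubmodule (Fin 3) ℂ d) ⊓
    ⨅ (i : Fin k), ⨅ (ν : Fin 3 → ℕ), ⨅ (_ : ν 0 + ν 1 + ν 2 < m i),
      LinearMap.ker ((aeval (p i)).toLinearMap ∘ₗ mderiv ν)

/-- The projective dimension `ℓ` of the linear system (`-1` means empty). -/
noncomputable def projDim {k : ℕ} (p : Fin k → Fin 3 → ℂ) (d : ℕ) (m : Fin k → ℕ) : ℤ :=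
  (Module.finrank ℂ (linSys p d m) : ℤ) - 1

/-- The virtual dimension `v = d(d+3)/2 - ∑ mᵢ(mᵢ+1)/2`. -/
def virtDim {k : ℕ} (d : ℕ) (m : Fin k → ℕ) : ℤ :=
  ((d : ℤ) * (d + 3)) / 2 - ∑ i : Fin k, ((m i : ℤ) * (m i + 1)) / 2

/-- The quasi-homogeneous multiplicity vector `(m₀, 6, …, 6)` on `n + 1` points. -/
def qh (n m0 : ℕ) : Fin (n + 1) → ℕ := fun i => if i = 0 then m0 else 6

/-- A property `Q` of configurations of `k` points of `ℙ²` (given by nonzero homogeneous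
coordinate vectors) holds for points in general position: there is a nonzero polynomial
in the coordinates such that `Q` holds whenever it does not vanish. -/
def Generically (k : ℕ) (Q : (Fin k → Fin 3 → ℂ) → Prop) : Prop :=
  ∃ P : MvPolynomial (Fin k × Fin 3) ℂ, P ≠ 0 ∧
    ∀ p : Fin k → Fin 3 → ℂ, (∀ i, p i ≠ 0) →
      eval (fun x => p x.1 x.2) P ≠ 0 → Q p

/-!
Throughout, `d = m₀ + m + 1` and `d + e = m e + k`; the families are those with `m = 6` and
`k = 2, 3, 4, 5`.

Counting conditions yields a curve of degree `e` with multiplicities `(e - 1, 1, …, 1)`. Multiplying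
by the `(m + 1 - k)`-th power of its equation embeds `L((k - 2) e + k, (k - 2) e, (k - 1)^{2e})`
into `L(d, m₀, m^{2e})`, and the virtual dimension of the former is `(k + 2).choose 2 - 1 - 2 e`.

For the opposite inequality semicontinuity allows the points to be special. Take them to be the
points to which a plane de Jonquières transformation of degree `e + 1` contracts the curve
`y ^ e = z` and the lines `y = t i`. The pullback of a member of `L(d, m₀, m^{2e})` is divisible by
`(y ^ e - z) ^ m₀ * ∏ (y - t i) ^ m`, and the quotient has degree at most `k` and vanishes at the
`2 e` points `(t i, t i ^ e)`. For `t i = 2 ^ i` these impose `min (2 e) ((k + 2).choose 2)`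
independent conditions on the polynomials of degree at most `k`, as a Vandermonde determinant shows.
-/

/-! ### Derivatives and multiplicities -/

theorem commute_pderiv {σ R : Type*} [CommRing R] (i j : σ) :
    Commute (pderiv (R := R) i).toLinearMap (pderiv (R := R) j).toLinearMap := by
  have h : ⁅pderiv (R := R) i, pderiv (R := R) j⁆ = 0 := by
    classical
    refine derivation_ext fun k => ?_
    simp [Derivation.commutator_apply, pderiv_X, Pi.single_apply, apply_ite]
  refine LinearMap.ext fun f => sub_eq_zero.mp ?_
  have hf : ⁅pderiv (R := R) i, pderiv (R := R) j⁆ f = 0 := by rw [h, Derivation.zero_apply]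
  rwa [Derivation.commutator_apply] at hf

theorem mderiv_eq_mul (ν : Fin 3 → ℕ) :
    mderiv ν = (pderiv (R := ℂ) (0 : Fin 3)).toLinearMap ^ ν 0 *
      ((pderiv (R := ℂ) (1 : Fin 3)).toLinearMap ^ ν 1 *
        (pderiv (R := ℂ) (2 : Fin 3)).toLinearMap ^ ν 2) := rfl

theorem mderiv_zero (f : MvPolynomial (Fin 3) ℂ) : mderiv 0 f = f := by
  simp [mderiv_eq_mul]

theorem mderiv_pderiv (ν : Fin 3 → ℕ) (j : Fin 3) (f : MvPolynomial (Fin 3) ℂ) :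
    mderiv ν (pderiv j f) = mderiv (ν + Pi.single j 1) f := by
  suffices h : mderiv (ν + Pi.single j 1) = mderiv ν * (pderiv (R := ℂ) j).toLinearMap by
    rw [h]; rfl
  have h01 := (commute_pderiv (R := ℂ) (0 : Fin 3) 1).pow_right (ν 1)
  have h02 := (commute_pderiv (R := ℂ) (0 : Fin 3) 2).pow_right (ν 2)
  have h12 := (commute_pderiv (R := ℂ) (1 : Fin 3) 2).pow_right (ν 2)
  rw [mderiv_eq_mul, mderiv_eq_mul]
  fin_cases j
  · simp [pow_succ, mul_assoc, h01.left_comm, h02.eq]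
  · simp [pow_succ, mul_assoc, h12.eq]
  · simp [pow_succ, mul_assoc]

theorem sum_add_single_one {ι : Type*} [Fintype ι] [DecidableEq ι] (ν : ι → ℕ) (j : ι) :
    ∑ i, (ν + Pi.single j 1 : ι → ℕ) i = ∑ i, ν i + 1 := by
  simp [Finset.sum_add_distrib]

theorem exists_eq_add_single_one {ι : Type*} [DecidableEq ι] {ν : ι → ℕ} (h : ν ≠ 0) :
    ∃ (j : ι) (μ : ι → ℕ), ν = μ + Pi.single j 1 := by
  obtain ⟨j, hj⟩ := Function.ne_iff.mp h
  refine ⟨j, ν - Pi.single j 1, (tsub_add_cancel_of_le fun i => ?_).symm⟩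
  rcases eq_or_ne i j with rfl | hij
  · simpa using Nat.one_le_iff_ne_zero.mpr hj
  · simp [hij]

/-- `f` has multiplicity at least `m` at `p`: all its partial derivatives of order `< m` vanish
there. -/
def VanishesTo (p : Fin 3 → ℂ) (m : ℕ) (f : MvPolynomial (Fin 3) ℂ) : Prop :=
  ∀ ν : Fin 3 → ℕ, ∑ i, ν i < m → aeval p (mderiv ν f) = 0

theorem mem_linSys {k : ℕ} {p : Fin k → Fin 3 → ℂ} {d : ℕ} {m : Fin k → ℕ}
    {f : MvPolynomial (Fin 3) ℂ} :
    f ∈ linSys p d m ↔ f.IsHomogeneous d ∧ ∀ i, VanishesTo (p i) (m i) f := by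
  simp [linSys, VanishesTo, Submodule.mem_iInf, Fin.sum_univ_three]

section VanishesTo

variable {p : Fin 3 → ℂ} {m n d : ℕ} {f g : MvPolynomial (Fin 3) ℂ}

theorem vanishesTo_zero (p : Fin 3 → ℂ) (f : MvPolynomial (Fin 3) ℂ) : VanishesTo p 0 f :=
  fun _ h => absurd h (Nat.not_lt_zero _)

theorem VanishesTo.mono (h : VanishesTo p n f) (hmn : m ≤ n) : VanishesTo p m f :=
  fun ν hν => h ν (hν.trans_le hmn)

theorem vanishesTo_succ :
    VanishesTo p (m + 1) f ↔ aeval p f = 0 ∧ ∀ j, VanishesTo p m (pderiv j f) := by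
  constructor
  · intro h
    refine ⟨by simpa [mderiv_zero] using h 0 (by simp), fun j ν hν => ?_⟩
    rw [mderiv_pderiv]
    exact h _ (by rw [sum_add_single_one]; omega)
  · rintro ⟨h0, h⟩ ν hν
    rcases eq_or_ne ν 0 with rfl | hne
    · rwa [mderiv_zero]
    · obtain ⟨j, μ, rfl⟩ := exists_eq_add_single_one hne
      rw [← mderiv_pderiv]
      exact h j μ (by rw [sum_add_single_one] at hν; omega)

theorem VanishesTo.add (hf : VanishesTo p m f) (hg : VanishesTo p m g) :
    VanishesTo p m (f + g) := fun ν hν => by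
  rw [map_add, map_add, hf ν hν, hg ν hν, add_zero]

theorem VanishesTo.mul (hf : VanishesTo p m f) (hg : VanishesTo p n g) :
    VanishesTo p (m + n) (f * g) := by
  induction hN : m + n generalizing m n f g with
  | zero => exact vanishesTo_zero _ _
  | succ N ih =>
    refine vanishesTo_succ.mpr ⟨?_, fun j => ?_⟩
    · rcases m with _ | m
      · obtain rfl : n = N + 1 := by omega
        rw [map_mul, (vanishesTo_succ.mp hg).1, mul_zero]
      · rw [map_mul, (vanishesTo_succ.mp hf).1, zero_mul]
    · rw [pderiv_mul]
      refine VanishesTo.add ?_ ?_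
      · rcases m with _ | m
        · exact ih (vanishesTo_zero _ _) (hg.mono (by omega : N ≤ n)) (zero_add N)
        · exact ih ((vanishesTo_succ.mp hf).2 j) hg (by omega)
      · rcases n with _ | n
        · exact ih (hf.mono (by omega : N ≤ m)) (vanishesTo_zero _ _) (add_zero N)
        · exact ih hf ((vanishesTo_succ.mp hg).2 j) (by omega)

theorem VanishesTo.pow (hf : VanishesTo p m f) (n : ℕ) : VanishesTo p (n * m) (f ^ n) := by
  induction n with
  | zero => simpa using vanishesTo_zero p _
  | succ n ih => rw [pow_succ, Nat.succ_mul]; exact ih.mul hf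

-- Euler's relation recovers a form from its partial derivatives, hence the lower orders from `m`.
theorem vanishesTo_of_top_order (hf : f.IsHomogeneous d) (hmd : m ≤ d)
    (h : ∀ ν : Fin 3 → ℕ, ∑ i, ν i = m → aeval p (mderiv ν f) = 0) :
    VanishesTo p (m + 1) f := by
  induction m generalizing d f with
  | zero => exact fun ν hν => h ν (by omega)
  | succ m ih =>
    have hd : ∀ j, VanishesTo p (m + 1) (pderiv j f) := fun j =>
      ih hf.pderiv (by omega) fun ν hν => by
        rw [mderiv_pderiv]
        exact h _ (by rw [sum_add_single_one, hν])
    refine vanishesTo_succ.mpr ⟨?_, hd⟩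
    have euler := congrArg (aeval p) hf.sum_X_mul_pderiv
    rw [map_sum, Finset.sum_eq_zero (fun j _ => by
      rw [map_mul, (vanishesTo_succ.mp (hd j)).1, mul_zero]), map_nsmul] at euler
    exact (smul_eq_zero.mp euler.symm).resolve_left (by omega)

end VanishesTo

theorem finrank_restrictSupport {σ : Type*} (R : Type*) [CommRing R] [Nontrivial R]
    (s : Finset (σ →₀ ℕ)) : Module.finrank R (restrictSupport R (s : Set (σ →₀ ℕ))) = s.card :=
  (Module.finrank_eq_card_basis (basisRestrictSupport R _)).trans (Fintype.card_coe s)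

theorem finrank_homogeneousSubmodule (σ R : Type*) [Fintype σ] [CommRing R] [Nontrivial R]
    (d : ℕ) : Module.finrank R (homogeneousSubmodule σ R d) = (Fintype.card σ).multichoose d := by
  classical
  have hs : {s : σ →₀ ℕ | s.degree = d} = (Finset.univ.finsuppAntidiag d : Finset (σ →₀ ℕ)) := by
    ext s
    simp [Finsupp.degree_eq_sum]
  rw [homogeneousSubmodule_eq_finsupp_supported, hs]
  exact (finrank_restrictSupport R _).trans (Finset.card_finsuppAntidiag_nat_eq_multichoose _)

theorem card_biUnion_finsuppAntidiag (σ : Type*) [Fintype σ] [DecidableEq σ] (k : ℕ) :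
    ((Finset.range (k + 1)).biUnion fun d =>
      (Finset.univ.finsuppAntidiag d : Finset (σ →₀ ℕ))).card =
        (Fintype.card σ + k).choose (Fintype.card σ) := by
  rw [Finset.card_biUnion fun a _ b _ hab => Finset.disjoint_left.mpr fun s ha hb => hab <|
    (Finset.mem_finsuppAntidiag.mp ha).1.symm.trans (Finset.mem_finsuppAntidiag.mp hb).1]
  simp only [Finset.card_finsuppAntidiag_nat_eq_multichoose, Finset.card_univ]
  rw [Nat.sum_range_multichoose, add_comm, Nat.choose_symm_add]

theorem finrank_restrictTotalDegree (σ R : Type*) [Fintype σ] [CommRing R] [Nontrivial R]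
    (k : ℕ) : Module.finrank R (restrictTotalDegree σ R k) =
      (Fintype.card σ + k).choose (Fintype.card σ) := by
  classical
  have hs : {s : σ →₀ ℕ | (s.sum fun _ n => n) ≤ k} = ((Finset.range (k + 1)).biUnion fun d =>
      Finset.univ.finsuppAntidiag d : Finset (σ →₀ ℕ)) := by
    ext s
    simp [Finsupp.sum_fintype]
  rw [restrictTotalDegree, hs, finrank_restrictSupport, card_biUnion_finsuppAntidiag]

/-! ### Semicontinuity and the dimension count -/

/-- The linear functionals `v ↦ (T i v)(p)`, a family of linear conditions on `V` depending
polynomially on the parameter `p`. -/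
noncomputable def evalFamily {K V σ ι : Type*} [Field K] [AddCommGroup V] [Module K V]
    (T : ι → V →ₗ[K] MvPolynomial σ K) (p : σ → K) : V →ₗ[K] ι → K :=
  LinearMap.pi fun i => (aeval p).toLinearMap ∘ₗ T i

section Semicontinuity

variable {K V σ ι : Type*} [Field K] [AddCommGroup V] [Module K V] [FiniteDimensional K V]
  [Finite ι]

theorem exists_forall_eval_eq_det (T : ι → V →ₗ[K] MvPolynomial σ K) (g : (ι → K) →ₗ[K] V) :
    ∃ P : MvPolynomial σ K, ∀ p, eval p P = LinearMap.det (g ∘ₗ evalFamily T p) := by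
  classical
  have := Fintype.ofFinite ι
  let b := Module.finBasis K V
  let M : Matrix _ _ (MvPolynomial σ K) := Matrix.of fun r c =>
    ∑ i, C (b.repr (g (Pi.single i 1)) r) * T i (b c)
  refine ⟨M.det, fun p => ?_⟩
  rw [RingHom.map_det, ← LinearMap.det_toMatrix b]
  congr 1
  ext r c
  have hsum : evalFamily T p (b c) = ∑ i, eval p (T i (b c)) • Pi.single i (1 : K) :=
    pi_eq_sum_univ' _
  rw [LinearMap.toMatrix_apply, LinearMap.comp_apply, hsum]
  simp [M, mul_comm]

theorem exists_finrank_ker_evalFamily_le (T : ι → V →ₗ[K] MvPolynomial σ K) (p₀ : σ → K) :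
    ∃ P : MvPolynomial σ K, eval p₀ P ≠ 0 ∧ ∀ p, eval p P ≠ 0 →
      Module.finrank K (LinearMap.ker (evalFamily T p)) ≤
        Module.finrank K (LinearMap.ker (evalFamily T p₀)) := by
  obtain ⟨U, hU⟩ := (LinearMap.ker (evalFamily T p₀)).exists_isCompl
  obtain ⟨g, hg⟩ := LinearMap.exists_leftInverse_of_injective
    ((evalFamily T p₀).domRestrict U) <| by
      rw [LinearMap.ker_domRestrict]
      exact Submodule.disjoint_iff_comap_eq_bot.mp hU.disjoint.symm
  obtain ⟨P, hP⟩ := exists_forall_eval_eq_det (fun i => T i ∘ₗ U.subtype) g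
  have hdet : ∀ p, eval p P = LinearMap.det (g ∘ₗ (evalFamily T p).domRestrict U) := hP
  refine ⟨P, by rw [hdet, hg, LinearMap.det_id]; exact one_ne_zero, fun p hp => ?_⟩
  have hker : LinearMap.ker (g ∘ₗ (evalFamily T p).domRestrict U) = ⊥ := by
    by_contra h
    exact hp ((hdet p).trans (LinearMap.det_eq_zero_iff_ker_ne_bot.mpr h))
  have hdisj : Disjoint U (LinearMap.ker (evalFamily T p)) := by
    rw [Submodule.disjoint_iff_comap_eq_bot, ← LinearMap.ker_domRestrict, eq_bot_iff, ← hker]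
    exact LinearMap.ker_le_ker_comp _ _
  have hle := Submodule.finrank_add_finrank_le_of_disjoint hdisj
  have heq := Submodule.finrank_add_eq_of_isCompl hU
  omega

end Semicontinuity

/-- The multi-indices of order `m - 1` (none for `m = 0`). On forms of large enough degree the
corresponding derivatives detect multiplicity `m`, by `vanishesTo_of_top_order`. -/
def topOrders : ℕ → Finset (Fin 3 → ℕ)
  | 0 => ∅
  | m + 1 => Finset.univ.piAntidiag m

theorem sum_lt_of_mem_topOrders {m : ℕ} {ν : Fin 3 → ℕ} (h : ν ∈ topOrders m) :
    ∑ i, ν i < m := by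
  rcases m with _ | m
  · simp [topOrders] at h
  · exact Nat.lt_succ_of_le (Finset.mem_piAntidiag.mp h).1.le

theorem card_topOrders (m : ℕ) : (topOrders m).card = (m + 1).choose 2 := by
  rcases m with _ | m
  · rfl
  · have h := Finset.card_finsuppAntidiag_nat_eq_choose (s := (Finset.univ : Finset (Fin 3))) m
    rw [Finset.finsuppAntidiag, Finset.card_map, Finset.card_attach] at h
    rw [topOrders, h, Finset.card_fin, show 3 + m - 1 = m + 2 by omega, Nat.choose_symm_add]

theorem vanishesTo_iff_topOrders {p : Fin 3 → ℂ} {m d : ℕ} {f : MvPolynomial (Fin 3) ℂ}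
    (hf : f.IsHomogeneous d) (hmd : m ≤ d + 1) :
    VanishesTo p m f ↔ ∀ ν ∈ topOrders m, aeval p (mderiv ν f) = 0 := by
  refine ⟨fun h ν hν => h ν (sum_lt_of_mem_topOrders hν), fun h => ?_⟩
  rcases m with _ | m
  · exact vanishesTo_zero p f
  · exact vanishesTo_of_top_order hf (by omega) fun ν hν =>
      h ν (Finset.mem_piAntidiag.mpr ⟨hν, fun i _ => Finset.mem_univ i⟩)

instance finiteDimensional_homogeneousSubmodule (d : ℕ) :
    FiniteDimensional ℂ (homogeneousSubmodule (Fin 3) ℂ d) :=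
  Submodule.finiteDimensional_of_le (S₂ := restrictTotalDegree (Fin 3) ℂ d) fun _ hf =>
    (mem_restrictTotalDegree _ _ _).mpr ((mem_homogeneousSubmodule _ _).mp hf).totalDegree_le

instance finiteDimensional_linSys {k : ℕ} (p : Fin k → Fin 3 → ℂ) (d : ℕ) (m : Fin k → ℕ) :
    FiniteDimensional ℂ (linSys p d m) :=
  Submodule.finiteDimensional_of_le (S₂ := homogeneousSubmodule (Fin 3) ℂ d) inf_le_left

/-- The conditions cutting `L(d; m)` out of the forms of degree `d`, with the coordinates of the
points as indeterminates: the component `⟨i, ν⟩` is the `ν`-th derivative at the `i`-th point. -/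
noncomputable def multiplicityConditions {k : ℕ} (d : ℕ) (m : Fin k → ℕ)
    (x : Σ i, topOrders (m i)) :
    homogeneousSubmodule (Fin 3) ℂ d →ₗ[ℂ] MvPolynomial (Fin k × Fin 3) ℂ :=
  (rename (R := ℂ) fun j => (x.1, j)).toLinearMap ∘ₗ mderiv x.2 ∘ₗ Submodule.subtype _

section DimensionCount

variable {k : ℕ} (p : Fin k → Fin 3 → ℂ) {d : ℕ} {m : Fin k → ℕ}

theorem evalFamily_multiplicityConditions_apply (x : Σ i, topOrders (m i))
    (f : homogeneousSubmodule (Fin 3) ℂ d) :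
    evalFamily (multiplicityConditions d m) (fun y => p y.1 y.2) f x =
      aeval (p x.1) (mderiv x.2 (f : MvPolynomial (Fin 3) ℂ)) :=
  aeval_rename _ _ _

theorem map_ker_evalFamily_multiplicityConditions (hm : ∀ i, m i ≤ d + 1) :
    (LinearMap.ker (evalFamily (multiplicityConditions d m) fun y => p y.1 y.2)).map
      (Submodule.subtype _) = linSys p d m := by
  ext f
  rw [Submodule.mem_map, mem_linSys]
  constructor
  · rintro ⟨f, hf, rfl⟩
    refine ⟨f.2, fun i => (vanishesTo_iff_topOrders f.2 (hm i)).mpr fun ν hν => ?_⟩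
    have hi := congrFun (LinearMap.mem_ker.mp hf) ⟨i, ν, hν⟩
    rwa [evalFamily_multiplicityConditions_apply] at hi
  · rintro ⟨hf, h⟩
    refine ⟨⟨f, hf⟩, LinearMap.mem_ker.mpr (funext fun x => ?_), rfl⟩
    rw [evalFamily_multiplicityConditions_apply]
    exact (vanishesTo_iff_topOrders hf (hm x.1)).mp (h x.1) x.2 x.2.2

theorem finrank_linSys_eq_finrank_ker (hm : ∀ i, m i ≤ d + 1) :
    Module.finrank ℂ (linSys p d m) = Module.finrank ℂ (LinearMap.ker
      (evalFamily (multiplicityConditions d m) fun y => p y.1 y.2)) := by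
  rw [← map_ker_evalFamily_multiplicityConditions p hm, Submodule.finrank_map_subtype_eq]

theorem choose_le_finrank_linSys_add (hm : ∀ i, m i ≤ d + 1) :
    (d + 2).choose 2 ≤ Module.finrank ℂ (linSys p d m) + ∑ i, (m i + 1).choose 2 := by
  set E := evalFamily (multiplicityConditions d m) fun y => p y.1 y.2
  have hV : Module.finrank ℂ (homogeneousSubmodule (Fin 3) ℂ d) = (d + 2).choose 2 := by
    rw [finrank_homogeneousSubmodule, Fintype.card_fin, Nat.multichoose_eq,
      show 3 + d - 1 = d + 2 by omega, Nat.choose_symm_add]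
  have hrange : Module.finrank ℂ (LinearMap.range E) ≤ ∑ i, (m i + 1).choose 2 := by
    refine (Submodule.finrank_le _).trans_eq ?_
    simp [card_topOrders]
  rw [finrank_linSys_eq_finrank_ker p hm, ← hV, ← E.finrank_range_add_finrank_ker, add_comm]
  exact Nat.add_le_add_left hrange _

theorem exists_finrank_linSys_le (hm : ∀ i, m i ≤ d + 1) :
    ∃ P : MvPolynomial (Fin k × Fin 3) ℂ, P ≠ 0 ∧ ∀ q : Fin k → Fin 3 → ℂ,
      eval (fun y => q y.1 y.2) P ≠ 0 →
        Module.finrank ℂ (linSys q d m) ≤ Module.finrank ℂ (linSys p d m) := by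
  obtain ⟨P, hP, hle⟩ := exists_finrank_ker_evalFamily_le (multiplicityConditions d m)
    fun y => p y.1 y.2
  refine ⟨P, fun h0 => hP (by rw [h0, map_zero]), fun q hq => ?_⟩
  rw [finrank_linSys_eq_finrank_ker q hm, finrank_linSys_eq_finrank_ker p hm]
  exact hle _ hq

end DimensionCount

/-! ### Quasi-homogeneous systems: the lower bound -/

section LinearSystem

variable {k : ℕ} {p : Fin k → Fin 3 → ℂ} {a b : ℕ} {μ ν : Fin k → ℕ}
  {f g : MvPolynomial (Fin 3) ℂ}

theorem mul_mem_linSys (hf : f ∈ linSys p a μ) (hg : g ∈ linSys p b ν) :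
    f * g ∈ linSys p (a + b) (μ + ν) := by
  rw [mem_linSys] at hf hg ⊢
  exact ⟨hf.1.mul hg.1, fun i => (hf.2 i).mul (hg.2 i)⟩

theorem pow_mem_linSys (hf : f ∈ linSys p a μ) (r : ℕ) :
    f ^ r ∈ linSys p (r * a) (r • μ) := by
  rw [mem_linSys] at hf ⊢
  exact ⟨mul_comm r a ▸ hf.1.pow r, fun i => (hf.2 i).pow r⟩

theorem finrank_linSys_le_finrank_linSys_add (hf : f ∈ linSys p a μ) (hf0 : f ≠ 0) (b : ℕ)
    (ν : Fin k → ℕ) :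
    Module.finrank ℂ (linSys p b ν) ≤ Module.finrank ℂ (linSys p (a + b) (μ + ν)) := by
  have hmul : ∀ g ∈ linSys p b ν, LinearMap.mulLeft ℂ f g ∈ linSys p (a + b) (μ + ν) :=
    fun g hg => mul_mem_linSys hf hg
  refine LinearMap.finrank_le_finrank_of_injective (f := (LinearMap.mulLeft ℂ f).restrict hmul) ?_
  exact fun g h hgh => Subtype.ext (mul_right_injective₀ hf0 (congrArg Subtype.val hgh))

end LinearSystem

/-- The quasi-homogeneous multiplicity vector `(m₀, m, …, m)` on `n + 1` points. -/
def quasiHom (n m₀ m : ℕ) : Fin (n + 1) → ℕ :=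
  Fin.cons m₀ fun _ => m

theorem qh_eq_quasiHom (n m₀ : ℕ) : qh n m₀ = quasiHom n m₀ 6 := by
  ext i
  cases i using Fin.cases <;> simp [qh, quasiHom]

theorem sum_quasiHom {M : Type*} [AddCommMonoid M] (n m₀ m : ℕ) (F : ℕ → M) :
    ∑ i, F (quasiHom n m₀ m i) = F m₀ + n • F m := by
  simp [quasiHom, Fin.sum_univ_succ]

theorem quasiHom_le {n m₀ m d : ℕ} (hm₀ : m₀ ≤ d) (hm : m ≤ d) (i : Fin (n + 1)) :
    quasiHom n m₀ m i ≤ d := by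
  cases i using Fin.cases
  · exact hm₀
  · exact hm

theorem smul_quasiHom_add_quasiHom (n r a b a' b' : ℕ) :
    r • quasiHom n a b + quasiHom n a' b' = quasiHom n (r * a + a') (r * b + b') := by
  ext i
  cases i using Fin.cases <;> simp [quasiHom]

theorem exists_mem_linSys_quasiHom_one_ne_zero {e : ℕ} (p : Fin (2 * (e + 1) + 1) → Fin 3 → ℂ) :
    ∃ A ∈ linSys p (e + 1) (quasiHom (2 * (e + 1)) e 1), A ≠ 0 := by
  have h := choose_le_finrank_linSys_add p (d := e + 1)
    (quasiHom_le (n := 2 * (e + 1)) (m₀ := e) (m := 1) (by omega) (by omega))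
  rw [sum_quasiHom _ _ _ fun m => (m + 1).choose 2] at h
  refine Submodule.exists_mem_ne_zero_of_ne_bot fun hbot => ?_
  rw [hbot, finrank_bot, ← Nat.cast_le (α := ℚ)] at h
  push_cast [Nat.cast_choose_two, smul_eq_mul] at h
  linarith

theorem choose_le_finrank_residual {e j : ℕ} (p : Fin (2 * (e + 1) + 1) → Fin 3 → ℂ) :
    (j + 4).choose 2 ≤ Module.finrank ℂ (linSys p (j * (e + 1) + (j + 2))
      (quasiHom (2 * (e + 1)) (j * (e + 1)) (j + 1))) + 2 * (e + 1) := by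
  have h := choose_le_finrank_linSys_add p (d := j * (e + 1) + (j + 2))
    (quasiHom_le (n := 2 * (e + 1)) (m₀ := j * (e + 1)) (m := j + 1) (by omega) (by nlinarith))
  rw [sum_quasiHom _ _ _ fun m => (m + 1).choose 2, smul_eq_mul] at h
  have hchoose : (j * (e + 1) + (j + 2) + 2).choose 2 + 2 * (e + 1) =
      (j * (e + 1) + 1).choose 2 + 2 * (e + 1) * (j + 1 + 1).choose 2 + (j + 4).choose 2 := by
    rw [← Nat.cast_inj (R := ℚ)]
    push_cast [Nat.cast_choose_two]
    ring
  omega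

-- A curve of degree `e` with multiplicities `(e - 1, 1, …, 1)` is a fixed part, `m + 1 - k` times.
theorem choose_le_finrank_linSys_quasiHom {e k m d m₀ : ℕ} (he : 1 ≤ e) (hk : 2 ≤ k)
    (hkm : k ≤ m + 1) (hd : d = m₀ + m + 1) (hdk : d + e = m * e + k)
    (p : Fin (2 * e + 1) → Fin 3 → ℂ) :
    (k + 2).choose 2 ≤ Module.finrank ℂ (linSys p d (quasiHom (2 * e) m₀ m)) + 2 * e := by
  obtain ⟨e, rfl⟩ := Nat.exists_eq_add_of_le' he
  obtain ⟨j, rfl⟩ := Nat.exists_eq_add_of_le' hk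
  obtain ⟨r, hr⟩ := Nat.exists_eq_add_of_le hkm
  obtain rfl : m = r + (j + 1) := by omega
  obtain ⟨A, hA, hA0⟩ := exists_mem_linSys_quasiHom_one_ne_zero p
  have h := finrank_linSys_le_finrank_linSys_add (pow_mem_linSys hA r) (pow_ne_zero r hA0)
    (j * (e + 1) + (j + 2)) (quasiHom (2 * (e + 1)) (j * (e + 1)) (j + 1))
  have hd' : r * (e + 1) + (j * (e + 1) + (j + 2)) = d := by nlinarith
  have hm₀ : r * e + j * (e + 1) = m₀ := by nlinarith
  rw [smul_quasiHom_add_quasiHom, hd', hm₀, mul_one] at h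
  exact (choose_le_finrank_residual p).trans (Nat.add_le_add_right h _)

/-! ### Substitution into forms and divisibility -/

section Substitution

variable {σ R A : Type*} [CommRing R] [CommRing A] [Algebra R A]

theorem aeval_mul_of_isHomogeneous {f : MvPolynomial σ R} {d : ℕ} (hf : f.IsHomogeneous d) (c : A)
    (g : σ → A) : aeval (fun j => c * g j) f = c ^ d * aeval g f := by
  rw [aeval_def, aeval_def, eval₂_eq, eval₂_eq, Finset.mul_sum]
  refine Finset.sum_congr rfl fun s hs => ?_
  have hd : ∑ i ∈ s.support, s i = d := by
    rw [← hf.degree_eq_sum_deg_support hs]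
  simp only [mul_pow, Finset.prod_mul_distrib, Finset.prod_pow_eq_pow_sum, hd]
  ring

theorem pow_dvd_aeval_of_isHomogeneous {f : MvPolynomial σ R} {d : ℕ} (hf : f.IsHomogeneous d)
    {a : A} {g : σ → A} (h : ∀ j, a ∣ g j) : a ^ d ∣ aeval g f := by
  choose u hu using h
  obtain rfl : g = fun j => a * u j := funext hu
  exact Dvd.intro _ (aeval_mul_of_isHomogeneous hf a u).symm

theorem dvd_aeval_sub_aeval {a : A} {g g' : σ → A} (h : ∀ j, a ∣ g j - g' j)
    (f : MvPolynomial σ R) : a ∣ aeval g f - aeval g' f := by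
  have hg : (Ideal.Quotient.mkₐ R (Ideal.span {a})).comp (aeval g) =
      (Ideal.Quotient.mkₐ R (Ideal.span {a})).comp (aeval g') :=
    algHom_ext fun j => by
      simpa using Ideal.Quotient.eq.mpr (Ideal.mem_span_singleton.mpr (h j))
  exact Ideal.mem_span_singleton.mp (Ideal.Quotient.eq.mp (DFunLike.congr_fun hg f))

theorem derivation_aeval [Fintype σ] (δ : Derivation R A A) (g : σ → A) (f : MvPolynomial σ R) :
    δ (aeval g f) = ∑ j, aeval g (pderiv j f) * δ (g j) := by
  classical
  induction f using MvPolynomial.induction_on with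
  | C a => simp
  | add f g hf hg => simp [hf, hg, add_mul, Finset.sum_add_distrib]
  | mul_X f i hf =>
    simp only [map_mul, aeval_X, Derivation.leibniz, hf, smul_eq_mul, pderiv_X, map_add, add_mul,
      Finset.sum_add_distrib, Finset.mul_sum, Pi.single_apply]
    congr 1
    · rw [Finset.sum_eq_single i] <;> simp +contextual [eq_comm]
    · exact Finset.sum_congr rfl fun j _ => by ring

end Substitution

theorem pow_succ_dvd_of_pow_dvd_derivation {K A : Type*} [Field K] [CharZero K] [CommRing A]
    [IsDomain A] [Algebra K A] (δ : Derivation K A A) {ℓ a : A} (hℓ : ℓ ≠ 0) (hδ : IsUnit (δ ℓ))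
    {n : ℕ} (ha : ℓ ∣ a) (hn : ℓ ^ n ∣ δ a) : ℓ ^ (n + 1) ∣ a := by
  induction n with
  | zero => simpa using ha
  | succ n ih =>
    obtain ⟨u, rfl⟩ := ih ((pow_dvd_pow ℓ n.le_succ).trans hn)
    have hunit : IsUnit ((n + 1 : ℕ) : A) := by
      simpa using (IsUnit.mk0 ((n + 1 : ℕ) : K) (Nat.cast_ne_zero.mpr n.succ_ne_zero)).map
        (algebraMap K A)
    have hleibniz : δ (ℓ ^ (n + 1) * u) =
        ℓ ^ (n + 1) * δ u + ℓ ^ n * (u * (δ ℓ * ((n + 1 : ℕ) : A))) := by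
      rw [Derivation.leibniz, Derivation.leibniz_pow]
      simp only [Nat.add_sub_cancel, smul_eq_mul, ← Nat.cast_smul_eq_nsmul A]
      ring
    rw [hleibniz, dvd_add_right (Dvd.intro _ rfl), pow_succ,
      mul_dvd_mul_iff_left (pow_ne_zero n hℓ), (hδ.mul hunit).dvd_mul_right] at hn
    rw [pow_succ]
    exact mul_dvd_mul_left _ hn

-- The hypothesis `hg` says that the substitution `g` contracts the locus `ℓ = 0` to the point `p`.
theorem VanishesTo.pow_dvd_aeval {A : Type*} [CommRing A] [IsDomain A] [Algebra ℂ A]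
    (δ : Derivation ℂ A A) {ℓ : A} (hℓ : ℓ ≠ 0) (hδ : IsUnit (δ ℓ)) {g : Fin 3 → A}
    {p : Fin 3 → ℂ} {c : A} (hg : ∀ j, ℓ ∣ g j - c * algebraMap ℂ A (p j)) {m d : ℕ}
    {f : MvPolynomial (Fin 3) ℂ} (hf : f.IsHomogeneous d) (h : VanishesTo p m f) :
    ℓ ^ m ∣ aeval g f := by
  induction m generalizing d f with
  | zero => simp
  | succ m ih =>
    obtain ⟨h0, hderiv⟩ := vanishesTo_succ.mp h
    refine pow_succ_dvd_of_pow_dvd_derivation δ hℓ hδ ?_ ?_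
    · have hp : aeval (fun j => algebraMap ℂ A (p j)) f = 0 :=
        (aeval_algebraMap_apply A p f).trans (by rw [h0, map_zero])
      have hsub := dvd_aeval_sub_aeval hg f
      rwa [aeval_mul_of_isHomogeneous hf, hp, mul_zero, sub_zero] at hsub
    · rw [derivation_aeval]
      exact Finset.dvd_sum fun j _ => (ih hf.pderiv (hderiv j)).mul_right _

section Degree

variable {σ τ R : Type*} [CommRing R]

theorem totalDegree_pow_of_isDomain [IsDomain R] {f : MvPolynomial σ R} (hf : f ≠ 0) (n : ℕ) :
    (f ^ n).totalDegree = n * f.totalDegree := by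
  induction n with
  | zero => simp
  | succ n ih => rw [pow_succ, totalDegree_mul_of_isDomain (pow_ne_zero n hf) hf, ih]; ring

theorem totalDegree_prod_of_isDomain [IsDomain R] {ι : Type*} (s : Finset ι)
    {f : ι → MvPolynomial σ R} (hf : ∀ i ∈ s, f i ≠ 0) :
    (∏ i ∈ s, f i).totalDegree = ∑ i ∈ s, (f i).totalDegree := by
  classical
  induction s using Finset.induction_on with
  | empty => simp
  | insert a s ha ih =>
    rw [Finset.forall_mem_insert] at hf
    rw [Finset.prod_insert ha, Finset.sum_insert ha,
      totalDegree_mul_of_isDomain hf.1 (Finset.prod_ne_zero_iff.mpr hf.2), ih hf.2]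

theorem totalDegree_aeval_le {g : σ → MvPolynomial τ R} {n : ℕ} (hg : ∀ j, (g j).totalDegree ≤ n)
    (f : MvPolynomial σ R) : (aeval g f).totalDegree ≤ f.totalDegree * n := by
  rw [aeval_def, eval₂_eq]
  refine totalDegree_finsetSum_le fun s hs => ?_
  calc (algebraMap R _ (coeff s f) * ∏ i ∈ s.support, g i ^ s i).totalDegree
      ≤ 0 + ∑ i ∈ s.support, (g i ^ s i).totalDegree := by
        refine (totalDegree_mul _ _).trans (add_le_add ?_ (totalDegree_finsetProd _ _))
        rw [algebraMap_eq, totalDegree_C]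
    _ ≤ ∑ i ∈ s.support, s i * n := by
        rw [zero_add]
        exact Finset.sum_le_sum fun i _ =>
          (totalDegree_pow _ _).trans (Nat.mul_le_mul_left _ (hg i))
    _ ≤ f.totalDegree * n := by
        rw [← Finset.sum_mul]
        exact Nat.mul_le_mul_right _ (le_totalDegree hs)

theorem totalDegree_polynomial_aeval_le (q : Polynomial R) (f : MvPolynomial σ R) :
    (Polynomial.aeval f q).totalDegree ≤ q.natDegree * f.totalDegree := by
  rw [Polynomial.aeval_eq_sum_range]
  refine totalDegree_finsetSum_le fun j hj => ?_
  refine (totalDegree_smul_le _ _).trans ((totalDegree_pow _ _).trans ?_)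
  exact Nat.mul_le_mul_right _ (Nat.lt_succ_iff.mp (Finset.mem_range.mp hj))

theorem totalDegree_X_sub_C [Nontrivial R] (i : σ) (a : R) :
    (X i - C a : MvPolynomial σ R).totalDegree = 1 := by
  rw [sub_eq_add_neg, ← map_neg, totalDegree_add_eq_left_of_totalDegree_lt] <;> simp

theorem X_sub_C_ne_zero [Nontrivial R] (i : σ) (a : R) : (X i - C a : MvPolynomial σ R) ≠ 0 :=
  fun h => by simpa [h] using totalDegree_X_sub_C i a

theorem irreducible_X_sub_C [IsDomain R] (i : σ) (a : R) :
    Irreducible (X i - C a : MvPolynomial σ R) := by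
  classical
  refine irreducible_of_totalDegree_eq_one (totalDegree_X_sub_C i a) fun x hx => ?_
  have hcoeff : coeff (Finsupp.single i 1) (X i - C a : MvPolynomial σ R) = 1 := by
    rw [coeff_sub, coeff_X, if_pos rfl, coeff_C,
      if_neg fun h => by simpa using DFunLike.congr_fun h i, sub_zero]
  exact isUnit_of_dvd_one (hcoeff ▸ hx _)

end Degree

theorem eq_zero_of_aeval_cons_one_eq_zero {R : Type*} [CommRing R] [IsDomain R] {n d : ℕ}
    {f : MvPolynomial (Fin (n + 1)) R} (hf : f.IsHomogeneous d)
    (h : aeval (Fin.cons 1 X : Fin (n + 1) → MvPolynomial (Fin n) R) f = 0) : f = 0 := by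
  let K := FractionRing (MvPolynomial (Fin (n + 1)) R)
  let x : Fin (n + 1) → K := fun j => algebraMap (MvPolynomial (Fin (n + 1)) R) K (X j)
  have hx : x 0 ≠ 0 := by simp [x]
  have hcone : (fun j => x 0 * (Fin.cons 1 fun i => x i.succ / x 0 : Fin (n + 1) → K) j) = x := by
    funext j
    cases j using Fin.cases <;> simp [mul_div_cancel₀ _ hx]
  have hdehom : aeval (Fin.cons 1 fun i => x i.succ / x 0 : Fin (n + 1) → K) f = 0 := by
    have hcomp : (aeval (R := R) fun i => x i.succ / x 0).comp
        (aeval (Fin.cons 1 X : Fin (n + 1) → MvPolynomial (Fin n) R)) =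
          aeval (Fin.cons 1 fun i => x i.succ / x 0 : Fin (n + 1) → K) :=
      algHom_ext fun j => by cases j using Fin.cases <;> simp
    rw [← hcomp, AlgHom.comp_apply, h, map_zero]
  have hxf : aeval x f = 0 := by
    rw [← hcone, aeval_mul_of_isHomogeneous hf, hdehom, mul_zero]
  refine FaithfulSMul.algebraMap_injective _ K ?_
  rw [map_zero, ← hxf]
  exact DFunLike.congr_fun (aeval_unique (IsScalarTower.toAlgHom R _ K)) f

/-! ### The de Jonquières transformation -/

/-- The equation of the curve `y ^ e = z` in the affine plane. -/
noncomputable def powCurve (e : ℕ) : MvPolynomial (Fin 2) ℂ :=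
  X 0 ^ e - X 1

/-- The de Jonquières transformation contracting the curve `y ^ e = z` to the point `(0 : 0 : 1)`
and the line `y = t i` to the point `(1 : t i : -Q (t i))`, for each `i`. -/
noncomputable def deJonq {n : ℕ} (e : ℕ) (t : Fin n → ℂ) (Q : Polynomial ℂ) :
    Fin 3 → MvPolynomial (Fin 2) ℂ :=
  ![powCurve e, X 0 * powCurve e,
    ∏ i, (X 0 - C (t i)) - Polynomial.aeval (X 0) Q * powCurve e]

/-- The points to which `deJonq e t Q` contracts curves. -/
noncomputable def contractedPoints {n : ℕ} (t : Fin n → ℂ) (Q : Polynomial ℂ) :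
    Fin (n + 1) → Fin 3 → ℂ :=
  Fin.cons ![0, 0, 1] fun i => ![1, t i, -Q.eval (t i)]

theorem powCurve_ne_zero (e : ℕ) : powCurve e ≠ 0 := fun h => by
  simpa [powCurve] using congrArg (eval ![1, 0]) h

theorem totalDegree_powCurve {e : ℕ} (he : 1 ≤ e) : (powCurve e).totalDegree = e := by
  have hlead : Finsupp.single 0 e ∈ (powCurve e).support := by
    classical
    simp [powCurve, coeff_X_pow, coeff_X, Finsupp.single_eq_single_iff]
  refine le_antisymm ((totalDegree_sub _ _).trans (by simp [he])) ?_
  simpa using le_totalDegree hlead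

section DeJonquieres

variable {n e d m m₀ : ℕ} {t : Fin n → ℂ} {Q : Polynomial ℂ} {f : MvPolynomial (Fin 3) ℂ}
  {H : MvPolynomial (Fin 2) ℂ}

theorem powCurve_pow_dvd_aeval_deJonq (hf : f.IsHomogeneous d) (h : VanishesTo ![0, 0, 1] m f) :
    powCurve e ^ m ∣ aeval (deJonq e t Q) f := by
  refine h.pow_dvd_aeval (pderiv 1) (powCurve_ne_zero e) (by simp [powCurve, pderiv_X])
    (c := ∏ i, (X 0 - C (t i))) (fun j => ?_) hf
  fin_cases j <;> simp [deJonq]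

theorem X_sub_C_pow_dvd_aeval_deJonq (hf : f.IsHomogeneous d) (i : Fin n)
    (h : VanishesTo ![1, t i, -Q.eval (t i)] m f) :
    (X 0 - C (t i)) ^ m ∣ aeval (deJonq e t Q) f := by
  refine h.pow_dvd_aeval (pderiv 0) (X_sub_C_ne_zero 0 (t i)) (by simp)
    (c := powCurve e) (fun j => ?_) hf
  fin_cases j
  · simp [deJonq]
  · exact Dvd.intro (powCurve e) (by simp [deJonq, algebraMap_eq]; ring)
  · have hG : X 0 - C (t i) ∣ ∏ i, (X 0 - C (t i) : MvPolynomial (Fin 2) ℂ) :=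
      Finset.dvd_prod_of_mem _ (Finset.mem_univ i)
    have hQ : X 0 - C (t i) ∣
        Polynomial.aeval (X 0 : MvPolynomial (Fin 2) ℂ) Q - C (Q.eval (t i)) := by
      simpa [algebraMap_eq] using map_dvd (Polynomial.aeval (X 0 : MvPolynomial (Fin 2) ℂ))
        (Polynomial.X_sub_C_dvd_sub_C_eval (p := Q) (a := t i))
    convert hG.sub (hQ.mul_right (powCurve e)) using 1
    simp [deJonq, algebraMap_eq]
    ring

theorem mul_pow_dvd_aeval_deJonq (ht : Function.Injective t)
    (hf : f ∈ linSys (contractedPoints t Q) d (quasiHom n m₀ m)) :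
    powCurve e ^ m₀ * (∏ i, (X 0 - C (t i))) ^ m ∣ aeval (deJonq e t Q) f := by
  obtain ⟨hd, hv⟩ := mem_linSys.mp hf
  rw [← Finset.prod_pow]
  refine IsRelPrime.mul_dvd (IsRelPrime.prod_right fun i _ => IsRelPrime.pow ?_)
    (powCurve_pow_dvd_aeval_deJonq hd (hv 0))
    (Finset.prod_dvd_of_isRelPrime (fun i _ j _ hij => IsRelPrime.pow ?_)
      fun i _ => X_sub_C_pow_dvd_aeval_deJonq hd i (hv i.succ))
  · refine (((irreducible_X_sub_C 0 (t i)).isRelPrime_iff_not_dvd).mpr ?_).symm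
    rintro ⟨g, hg⟩
    simpa [powCurve] using congrArg (eval ![t i, t i ^ e + 1]) hg
  · refine ((irreducible_X_sub_C 0 (t i)).isRelPrime_iff_not_dvd).mpr ?_
    rintro ⟨g, hg⟩
    have heval : t i - t j = 0 := by simpa using congrArg (eval ![t i, 0]) hg
    exact hij (ht (sub_eq_zero.mp heval))

theorem X_add_aeval_X_ne_zero (Q : Polynomial ℂ) :
    (X 1 + Polynomial.aeval (X 0) Q : MvPolynomial (Fin 2) ℂ) ≠ 0 := fun h => by
  have heval := congrArg (aeval ![(0 : ℂ), 1 - Q.eval 0]) h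
  rw [map_add, ← Polynomial.aeval_algHom_apply] at heval
  simp at heval

-- The inverse rational map is `(y, z) ↦ (y, y ^ e - G(y) / (z + Q(y)))` with `G = ∏ (y - t i)`.
theorem exists_algHom_deJonq_eq_mul (e : ℕ) (t : Fin n → ℂ) (Q : Polynomial ℂ) :
    ∃ (φ : MvPolynomial (Fin 2) ℂ →ₐ[ℂ] FractionRing (MvPolynomial (Fin 2) ℂ))
      (w : FractionRing (MvPolynomial (Fin 2) ℂ)), w ≠ 0 ∧
        ∀ j, φ (deJonq e t Q j) =
          w * algebraMap _ _ ((Fin.cons 1 X : Fin 3 → MvPolynomial (Fin 2) ℂ) j) := by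
  let ι := IsScalarTower.toAlgHom ℂ (MvPolynomial (Fin 2) ℂ)
    (FractionRing (MvPolynomial (Fin 2) ℂ))
  have hι : Function.Injective ι := FaithfulSMul.algebraMap_injective _ _
  have hQ : ι (X 1 + Polynomial.aeval (X 0) Q) ≠ 0 :=
    (map_ne_zero_iff ι hι).mpr (X_add_aeval_X_ne_zero Q)
  have hG : ι (∏ i, (X 0 - C (t i))) ≠ 0 :=
    (map_ne_zero_iff ι hι).mpr (Finset.prod_ne_zero_iff.mpr fun i _ => X_sub_C_ne_zero 0 (t i))
  let w := ι (∏ i, (X 0 - C (t i))) / ι (X 1 + Polynomial.aeval (X 0) Q)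
  have hw : w * ι (X 1 + Polynomial.aeval (X 0) Q) = ι (∏ i, (X 0 - C (t i))) :=
    div_mul_cancel₀ _ hQ
  let φ : MvPolynomial (Fin 2) ℂ →ₐ[ℂ] _ := aeval ![ι (X 0), ι (X 0) ^ e - w]
  have hφX : φ (X 0) = ι (X 0) := by simp [φ]
  have hφW : φ (powCurve e) = w := by simp [φ, powCurve]
  have hφG : φ (∏ i, (X 0 - C (t i))) = ι (∏ i, (X 0 - C (t i))) := by
    simp only [map_prod, map_sub, hφX, ← algebraMap_eq, AlgHom.commutes]
  have hφQ : φ (Polynomial.aeval (X 0) Q) = ι (Polynomial.aeval (X 0) Q) := by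
    rw [← Polynomial.aeval_algHom_apply, hφX, Polynomial.aeval_algHom_apply]
  refine ⟨φ, w, div_ne_zero hG hQ, fun j => ?_⟩
  fin_cases j
  · simp [deJonq, hφW]
  · simp [deJonq, hφW, hφX, ι, mul_comm]
  · change φ (∏ i, (X 0 - C (t i)) - Polynomial.aeval (X 0) Q * powCurve e) = w * ι (X 1)
    rw [map_sub, map_mul, hφG, hφQ, hφW, ← hw, map_add]
    ring

theorem eq_zero_of_aeval_deJonq_eq_zero (hf : f.IsHomogeneous d)
    (h : aeval (deJonq e t Q) f = 0) : f = 0 := by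
  obtain ⟨φ, w, hw, hφ⟩ := exists_algHom_deJonq_eq_mul e t Q
  have hzero := congrArg φ h
  rw [comp_aeval_apply, map_zero, funext hφ, aeval_mul_of_isHomogeneous hf] at hzero
  have hdehom := (aeval_algebraMap_apply _ _ f).symm.trans
    ((mul_eq_zero.mp hzero).resolve_left (pow_ne_zero d hw))
  rw [FaithfulSMul.algebraMap_eq_zero_iff] at hdehom
  exact eq_zero_of_aeval_cons_one_eq_zero hf hdehom

theorem totalDegree_deJonq_le (he : 1 ≤ e) (hQ : Q.natDegree ≤ e)
    (hGQ : (∏ i, (Polynomial.X - Polynomial.C (t i)) - Polynomial.X ^ e * Q).natDegree ≤ e + 1)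
    (j : Fin 3) : (deJonq e t Q j).totalDegree ≤ e + 1 := by
  have hW : (powCurve e).totalDegree ≤ e := (totalDegree_powCurve he).le
  have hX (i : Fin 2) : (X i : MvPolynomial (Fin 2) ℂ).totalDegree = 1 := totalDegree_X i
  have hq (q : Polynomial ℂ) :
      (Polynomial.aeval (X 0 : MvPolynomial (Fin 2) ℂ) q).totalDegree ≤ q.natDegree := by
    simpa using totalDegree_polynomial_aeval_le q (X 0 : MvPolynomial (Fin 2) ℂ)
  fin_cases j
  · exact hW.trans e.le_succ
  · refine (totalDegree_mul (X 0) (powCurve e)).trans ?_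
    rw [hX, add_comm]
    exact Nat.succ_le_succ hW
  · have hsplit : deJonq e t Q 2 = Polynomial.aeval (X 0)
        (∏ i, (Polynomial.X - Polynomial.C (t i)) - Polynomial.X ^ e * Q) +
          Polynomial.aeval (X 0) Q * X 1 := by
      simp [deJonq, powCurve, algebraMap_eq]
      ring
    change (deJonq e t Q 2).totalDegree ≤ e + 1
    rw [hsplit]
    refine (totalDegree_add _ _).trans (max_le ((hq _).trans hGQ) ?_)
    refine (totalDegree_mul _ _).trans ?_
    rw [hX]
    exact Nat.succ_le_succ ((hq Q).trans hQ)

theorem totalDegree_le_of_aeval_deJonq_eq (he : 1 ≤ e) (hQ : Q.natDegree ≤ e)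
    (hGQ : (∏ i, (Polynomial.X - Polynomial.C (t i)) - Polynomial.X ^ e * Q).natDegree ≤ e + 1)
    (hf : f.IsHomogeneous d) (hH : H ≠ 0)
    (h : aeval (deJonq e t Q) f = powCurve e ^ m₀ * (∏ i, (X 0 - C (t i))) ^ m * H) :
    m₀ * e + m * n + H.totalDegree ≤ d * (e + 1) := by
  have hW := powCurve_ne_zero e
  have hX : ∀ i ∈ Finset.univ, (X 0 - C (t i) : MvPolynomial (Fin 2) ℂ) ≠ 0 :=
    fun i _ => X_sub_C_ne_zero 0 (t i)
  have hG := Finset.prod_ne_zero_iff.mpr hX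
  have hdeg := (totalDegree_aeval_le (totalDegree_deJonq_le he hQ hGQ) f).trans
    (Nat.mul_le_mul_right _ hf.totalDegree_le)
  rw [h, totalDegree_mul_of_isDomain (mul_ne_zero (pow_ne_zero _ hW) (pow_ne_zero _ hG)) hH,
    totalDegree_mul_of_isDomain (pow_ne_zero _ hW) (pow_ne_zero _ hG),
    totalDegree_pow_of_isDomain hW, totalDegree_pow_of_isDomain hG,
    totalDegree_prod_of_isDomain _ hX, totalDegree_powCurve he] at hdeg
  simpa [totalDegree_X_sub_C] using hdeg

/-- Restriction of polynomials to the curve germ `s ↦ (a + s, (a + s) ^ e - s)`, which crosses both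
`y = a` and `y ^ e = z` transversally at `(a, a ^ e)`. -/
noncomputable def germ (e : ℕ) (a : ℂ) : MvPolynomial (Fin 2) ℂ →ₐ[ℂ] Polynomial ℂ :=
  aeval ![Polynomial.X + Polynomial.C a, (Polynomial.X + Polynomial.C a) ^ e - Polynomial.X]

theorem X_dvd_germ_iff {a : ℂ} {P : MvPolynomial (Fin 2) ℂ} :
    Polynomial.X ∣ germ e a P ↔ eval ![a, a ^ e] P = 0 := by
  have heval : (Polynomial.aeval (0 : ℂ)).comp (germ e a) = aeval ![a, a ^ e] :=
    algHom_ext fun j => by fin_cases j <;> simp [germ]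
  rw [Polynomial.X_dvd_iff, Polynomial.coeff_zero_eq_eval_zero]
  exact Eq.congr_left (DFunLike.congr_fun heval P)

theorem germ_powCurve (e : ℕ) (a : ℂ) : germ e a (powCurve e) = Polynomial.X := by
  simp [germ, powCurve]

theorem germ_X_sub_C (e : ℕ) (a : ℂ) : germ e a (X 0 - C a) = Polynomial.X := by
  simp [germ]

theorem X_dvd_germ_deJonq (i : Fin n) (j : Fin 3) :
    Polynomial.X ∣ germ e (t i) (deJonq e t Q j) := by
  have hG : Polynomial.X ∣ germ e (t i) (∏ i, (X 0 - C (t i))) := by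
    rw [← germ_X_sub_C e (t i)]
    exact map_dvd _ (Finset.dvd_prod_of_mem _ (Finset.mem_univ i))
  fin_cases j
  · exact (germ_powCurve e (t i)).symm.dvd
  · simp [deJonq, germ_powCurve]
  · simpa [deJonq, germ_powCurve] using hG.sub (Dvd.intro_left _ rfl)

-- All components of the transformation vanish at `(t i, t i ^ e)`, so the pullback of `f` vanishes
-- there to order `d`, whereas the first two factors account for order `m₀ + m` only.
theorem eval_eq_zero_of_aeval_deJonq_eq (ht : Function.Injective t) (hf : f.IsHomogeneous d)
    (hd : m₀ + m < d)
    (h : aeval (deJonq e t Q) f = powCurve e ^ m₀ * (∏ i, (X 0 - C (t i))) ^ m * H) (i : Fin n) :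
    eval ![t i, t i ^ e] H = 0 := by
  rw [← X_dvd_germ_iff]
  set R := ∏ j ∈ Finset.univ.erase i, germ e (t i) (X 0 - C (t j)) with hR
  have hsplit : germ e (t i) (∏ j, (X 0 - C (t j))) = Polynomial.X * R := by
    rw [map_prod, ← Finset.mul_prod_erase _ _ (Finset.mem_univ i), germ_X_sub_C]
  have hXR : ¬ Polynomial.X ∣ R := by
    rw [hR, Polynomial.prime_X.dvd_finsetProd_iff]
    rintro ⟨j, hj, hdvd⟩
    rw [X_dvd_germ_iff] at hdvd
    have heval : t i - t j = 0 := by simpa using hdvd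
    exact Finset.ne_of_mem_erase hj (ht (sub_eq_zero.mp heval)).symm
  have hpow : Polynomial.X ^ d ∣ germ e (t i) (aeval (deJonq e t Q) f) := by
    rw [comp_aeval_apply]
    exact pow_dvd_aeval_of_isHomogeneous hf (X_dvd_germ_deJonq i)
  rw [h, map_mul, map_mul, map_pow, map_pow, germ_powCurve, hsplit, mul_pow, ← mul_assoc,
    ← pow_add, mul_assoc] at hpow
  have hdvd := (pow_dvd_pow Polynomial.X hd).trans hpow
  rw [pow_succ, mul_dvd_mul_iff_left (pow_ne_zero _ Polynomial.X_ne_zero)] at hdvd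
  exact (Polynomial.prime_X.dvd_or_dvd hdvd).resolve_left fun hRm =>
    hXR (Polynomial.prime_X.dvd_of_dvd_pow hRm)

end DeJonquieres

/-! ### Interpolation -/

theorem exists_eval_weighted_point_eq {σ K : Type*} [Field K] {b : K}
    (hb : Function.Injective fun j : ℕ => b ^ j) (w : σ → ℕ) {n : ℕ} {ν : Fin n → σ →₀ ℕ}
    (hν : Function.Injective fun j => Finsupp.weight w (ν j)) (v : Fin n → K) :
    ∃ c : Fin n → K, ∀ i : Fin n,
      eval (fun s => (b ^ (i : ℕ)) ^ w s) (∑ j, monomial (ν j) (c j)) = v i := by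
  have hunit : IsUnit (Matrix.vandermonde fun j => b ^ Finsupp.weight w (ν j)).transpose := by
    rw [Matrix.isUnit_transpose, Matrix.isUnit_iff_isUnit_det, isUnit_iff_ne_zero,
      Matrix.det_vandermonde_ne_zero_iff]
    exact hb.comp hν
  obtain ⟨c, rfl⟩ := Matrix.mulVec_surjective_iff_isUnit.mpr hunit v
  refine ⟨c, fun i => ?_⟩
  have hpoint (s : σ →₀ ℕ) :
      (s.prod fun x k => ((b ^ (i : ℕ)) ^ w x) ^ k) = (b ^ Finsupp.weight w s) ^ (i : ℕ) := by
    rw [Finsupp.weight_apply, Finsupp.sum, ← Finset.prod_pow_eq_pow_sum, ← Finset.prod_pow]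
    exact Finset.prod_congr rfl fun x _ => by rw [smul_eq_mul]; ring
  simp only [map_sum, eval_monomial, hpoint, Matrix.mulVec, dotProduct, Matrix.transpose_apply,
    Matrix.vandermonde_apply]
  exact Finset.sum_congr rfl fun j _ => mul_comm _ _

theorem finrank_add_le_of_forall_eval_eq_zero {σ K : Type*} [Fintype σ] [Field K] {n k : ℕ}
    {x : Fin n → σ → K}
    (hx : ∀ v : Fin n → K, ∃ f ∈ restrictTotalDegree σ K k, ∀ i, eval (x i) f = v i)
    {T : Submodule K (MvPolynomial σ K)} (hT : T ≤ restrictTotalDegree σ K k)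
    (hTx : ∀ f ∈ T, ∀ i, eval (x i) f = 0) :
    Module.finrank K T + n ≤ (Fintype.card σ + k).choose (Fintype.card σ) := by
  let E : restrictTotalDegree σ K k →ₗ[K] Fin n → K :=
    LinearMap.pi fun i => (aeval (x i)).toLinearMap ∘ₗ Submodule.subtype _
  have hE : LinearMap.range E = ⊤ := LinearMap.range_eq_top.mpr fun v => by
    obtain ⟨f, hf, hfv⟩ := hx v
    exact ⟨⟨f, hf⟩, funext hfv⟩
  have hle : T ≤ (LinearMap.ker E).map (Submodule.subtype _) := fun f hf =>
    ⟨⟨f, hT hf⟩, LinearMap.mem_ker.mpr (funext (hTx f hf)), rfl⟩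
  have hker := (Submodule.finrank_mono hle).trans_eq (Submodule.finrank_map_subtype_eq _ _)
  have hrank := E.finrank_range_add_finrank_ker
  rw [hE, finrank_top, Module.finrank_fin_fun, finrank_restrictTotalDegree] at hrank
  omega

theorem weight_one_cons (e : ℕ) (s : Fin 2 →₀ ℕ) :
    Finsupp.weight ![1, e] s = s 0 + e * s 1 := by
  simp [Finsupp.weight_apply, Finsupp.sum_fintype, mul_comm]

theorem weight_injOn_of_lt {e k : ℕ} (hke : k < e) :
    Set.InjOn (Finsupp.weight ![1, e]) {s : Fin 2 →₀ ℕ | s.degree ≤ k} := by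
  intro s hs s' hs' h
  simp only [Set.mem_ofPred_eq, Finsupp.degree_eq_sum, Fin.sum_univ_two] at hs hs'
  rw [weight_one_cons, weight_one_cons] at h
  have hmod : s 0 = s' 0 := by
    have := congrArg (· % e) h
    simpa [Nat.mod_eq_of_lt (show s 0 < e by omega), Nat.mod_eq_of_lt (show s' 0 < e by omega)]
  ext i
  fin_cases i
  · exact hmod
  · exact Nat.eq_of_mul_eq_mul_left (by omega) (Nat.add_left_cancel (hmod ▸ h))

theorem exists_degree_le_injective_weight {e k n : ℕ} (hn : n ≤ 2 * e)
    (hnk : n ≤ (k + 2).choose 2) :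
    ∃ ν : Fin n → Fin 2 →₀ ℕ, (∀ j, (ν j).degree ≤ k) ∧
      Function.Injective fun j => Finsupp.weight ![1, e] (ν j) := by
  rcases lt_or_ge k e with hke | hek
  · let S := (Finset.range (k + 1)).biUnion fun d =>
      (Finset.univ.finsuppAntidiag d : Finset (Fin 2 →₀ ℕ))
    have hS : Fintype.card (Fin n) ≤ Fintype.card S := by
      rwa [Fintype.card_coe, card_biUnion_finsuppAntidiag, Fintype.card_fin, Fintype.card_fin,
        add_comm 2 k]
    obtain ⟨φ⟩ := Function.Embedding.nonempty_of_card_le hS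
    have hdeg (j : Fin n) : (φ j : Fin 2 →₀ ℕ).degree ≤ k := by
      obtain ⟨d, hd, hφ⟩ := Finset.mem_biUnion.mp (φ j).2
      rw [Finsupp.degree_eq_sum, (Finset.mem_finsuppAntidiag.mp hφ).1]
      exact Finset.mem_range_succ_iff.mp hd
    exact ⟨fun j => φ j, hdeg, fun i j hij =>
      φ.injective (Subtype.ext (weight_injOn_of_lt hke (hdeg i) (hdeg j) hij))⟩
  · refine ⟨fun j => Finsupp.single 0 (j % e) + Finsupp.single 1 (j / e), fun j => ?_,
      fun i j hij => ?_⟩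
    · have hj : (j : ℕ) < n := j.2
      have hmod : (j : ℕ) % e < e := Nat.mod_lt _ (by omega)
      have hdiv : (j : ℕ) / e < 2 := Nat.div_lt_of_lt_mul (by omega)
      rw [map_add, Finsupp.degree_single, Finsupp.degree_single]
      omega
    · simpa [weight_one_cons, Nat.mod_add_div, Fin.ext_iff] using hij

theorem pow_two_injective : Function.Injective fun j : ℕ => (2 : ℂ) ^ j := fun i j hij =>
  Nat.pow_right_injective le_rfl (show 2 ^ i = 2 ^ j by simp only at hij; exact_mod_cast hij)

theorem exists_eval_powCurve_point_eq {e k n : ℕ} (hn : n ≤ 2 * e) (hnk : n ≤ (k + 2).choose 2)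
    (v : Fin n → ℂ) : ∃ f ∈ restrictTotalDegree (Fin 2) ℂ k,
      ∀ i : Fin n, eval ![2 ^ (i : ℕ), (2 ^ (i : ℕ)) ^ e] f = v i := by
  obtain ⟨ν, hdeg, hν⟩ := exists_degree_le_injective_weight hn hnk
  obtain ⟨c, hc⟩ := exists_eval_weighted_point_eq pow_two_injective ![1, e] hν v
  refine ⟨∑ j, monomial (ν j) (c j), Submodule.sum_mem _ fun j _ => ?_, fun i => ?_⟩
  · rw [mem_restrictTotalDegree]
    exact (totalDegree_monomial_le _ _).trans (hdeg j)
  · rw [← hc i]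
    congr 2
    funext s
    fin_cases s <;> simp

/-! ### The generic dimension -/

theorem exists_finrank_eq_of_forall_dvd {K V A : Type*} [Field K] [AddCommGroup V] [Module K V]
    [CommRing A] [IsDomain A] [Algebra K A] {φ : V →ₗ[K] A} (hφ : Function.Injective φ) {a : A}
    (ha : a ≠ 0) (hdvd : ∀ v, a ∣ φ v) :
    ∃ T : Submodule K A, Module.finrank K T = Module.finrank K V ∧
      ∀ b ∈ T, ∃ v, φ v = a * b := by
  have hmul : Function.Injective (LinearMap.mulLeft K a) := mul_right_injective₀ ha
  have hrange : LinearMap.range φ ≤ LinearMap.range (LinearMap.mulLeft K a) := by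
    rintro _ ⟨v, rfl⟩
    obtain ⟨b, hb⟩ := hdvd v
    exact ⟨b, hb.symm⟩
  refine ⟨(LinearMap.range φ).comap (LinearMap.mulLeft K a), ?_, fun b hb => hb⟩
  rw [(Submodule.equivMapOfInjective _ hmul _).finrank_eq, Submodule.map_comap_eq_of_le hrange,
    LinearMap.finrank_range_of_inj hφ]

theorem exists_natDegree_le_natDegree_sub_le {n e : ℕ} (hn : n ≤ 2 * e) (t : Fin n → ℂ) :
    ∃ Q : Polynomial ℂ, Q.natDegree ≤ e ∧
      (∏ i, (Polynomial.X - Polynomial.C (t i)) - Polynomial.X ^ e * Q).natDegree ≤ e := by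
  set G : Polynomial ℂ := ∏ i, (Polynomial.X - Polynomial.C (t i)) with hG
  have hXe : (Polynomial.X ^ e : Polynomial ℂ).Monic := Polynomial.monic_X_pow e
  refine ⟨G /ₘ Polynomial.X ^ e, ?_, ?_⟩
  · rw [Polynomial.natDegree_divByMonic _ hXe, hG,
      Polynomial.natDegree_finsetProd_X_sub_C_eq_card, Polynomial.natDegree_X_pow,
      Finset.card_univ, Fintype.card_fin]
    omega
  · rw [← Polynomial.modByMonic_eq_sub_mul_div G]
    simpa using Polynomial.natDegree_modByMonic_le G hXe

theorem exists_finrank_linSys_quasiHom_add_le {e k m d m₀ : ℕ} (he : 1 ≤ e) (hd : d = m₀ + m + 1)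
    (hdk : d + e = m * e + k) : ∃ p : Fin (2 * e + 1) → Fin 3 → ℂ,
      Module.finrank ℂ (linSys p d (quasiHom (2 * e) m₀ m)) + min (2 * e) ((k + 2).choose 2) ≤
        (k + 2).choose 2 := by
  let t : Fin (2 * e) → ℂ := fun i => 2 ^ (i : ℕ)
  have ht : Function.Injective t := pow_two_injective.comp Fin.val_injective
  obtain ⟨Q, hQ, hGQ⟩ := exists_natDegree_le_natDegree_sub_le le_rfl t
  let L := linSys (contractedPoints t Q) d (quasiHom (2 * e) m₀ m)
  have hL (f : L) : (f : MvPolynomial (Fin 3) ℂ).IsHomogeneous d := (mem_linSys.mp f.2).1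
  let φ : L →ₗ[ℂ] MvPolynomial (Fin 2) ℂ := (aeval (deJonq e t Q)).toLinearMap ∘ₗ L.subtype
  have hφ : Function.Injective φ := (injective_iff_map_eq_zero φ).mpr fun f hf =>
    Subtype.ext (eq_zero_of_aeval_deJonq_eq_zero (hL f) hf)
  have hne : powCurve e ^ m₀ * (∏ i, (X 0 - C (t i))) ^ m ≠ 0 :=
    mul_ne_zero (pow_ne_zero _ (powCurve_ne_zero e))
      (pow_ne_zero _ (Finset.prod_ne_zero_iff.mpr fun i _ => X_sub_C_ne_zero 0 (t i)))
  obtain ⟨T, hTL, hT⟩ := exists_finrank_eq_of_forall_dvd hφ hne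
    fun f => mul_pow_dvd_aeval_deJonq ht f.2
  have hsum : d * (e + 1) = m₀ * e + m * (2 * e) + k := by nlinarith
  have hdeg : T ≤ restrictTotalDegree (Fin 2) ℂ k := fun H hH => by
    rw [mem_restrictTotalDegree]
    obtain ⟨f, hf⟩ := hT H hH
    rcases eq_or_ne H 0 with rfl | hH0
    · simp
    · have hfH := totalDegree_le_of_aeval_deJonq_eq he hQ (hGQ.trans e.le_succ) (hL f) hH0 hf
      omega
  have hvanish (H) (hH : H ∈ T) (i : Fin (min (2 * e) ((k + 2).choose 2))) :
      eval ![(2 : ℂ) ^ (i : ℕ), (2 ^ (i : ℕ)) ^ e] H = 0 := by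
    obtain ⟨f, hf⟩ := hT H hH
    exact eval_eq_zero_of_aeval_deJonq_eq ht (hL f) (by omega) hf (Fin.castLE (min_le_left _ _) i)
  refine ⟨contractedPoints t Q, ?_⟩
  have hle := finrank_add_le_of_forall_eval_eq_zero
    (exists_eval_powCurve_point_eq (min_le_left _ _) (min_le_right _ _)) hdeg hvanish
  rwa [hTL, Fintype.card_fin, add_comm 2 k] at hle

theorem generically_finrank_linSys_quasiHom {e k m d m₀ : ℕ} (he : 1 ≤ e) (hk : 2 ≤ k)
    (hkm : k ≤ m + 1) (hd : d = m₀ + m + 1) (hdk : d + e = m * e + k) :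
    Generically (2 * e + 1) fun p =>
      Module.finrank ℂ (linSys p d (quasiHom (2 * e) m₀ m)) = (k + 2).choose 2 - 2 * e := by
  obtain ⟨p₀, hp₀⟩ := exists_finrank_linSys_quasiHom_add_le he hd hdk
  obtain ⟨P, hP, hle⟩ := exists_finrank_linSys_le p₀
    fun i => (quasiHom_le (n := 2 * e) (m₀ := m₀) (m := m) (by omega) (by omega) i).trans d.le_succ
  refine ⟨P, hP, fun p _ hp => ?_⟩
  have hlower := choose_le_finrank_linSys_quasiHom he hk hkm hd hdk p
  have hupper := hle p hp
  omega

theorem virtDim_eq_choose {k : ℕ} (d : ℕ) (m : Fin k → ℕ) :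
    virtDim d m = (d + 2).choose 2 - 1 - ∑ i, ((m i + 1).choose 2 : ℤ) := by
  have hd : ((d : ℤ) * (d + 3)) / 2 = (d + 2).choose 2 - 1 := by
    rw [Nat.choose_two_right]
    push_cast
    rw [show ((d : ℤ) + 2) * (d + 1) = d * (d + 3) + 1 * 2 by ring,
      Int.add_mul_ediv_right _ _ two_ne_zero, add_sub_cancel_right]
  rw [virtDim, hd]
  congr 1
  refine Finset.sum_congr rfl fun i _ => ?_
  rw [Nat.choose_two_right, Nat.add_sub_cancel, mul_comm]
  push_cast
  rfl

theorem virtDim_quasiHom {e k m d m₀ : ℕ} (hkm : k ≤ m + 1) (hd : d = m₀ + m + 1)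
    (hdk : d + e = m * e + k) : virtDim d (quasiHom (2 * e) m₀ m) =
      (k + 2).choose 2 - 1 - 2 * e - (m + 1 - k).choose 2 := by
  rw [virtDim_eq_choose, sum_quasiHom _ _ _ fun m => ((m + 1).choose 2 : ℤ),
    ← Int.cast_inj (α := ℚ)]
  have hm₀ : (m₀ : ℚ) = m * e + k - e - m - 1 := by
    have : ((m₀ + m + 1 + e : ℕ) : ℚ) = (m * e + k : ℕ) := by rw [← hd, hdk]
    push_cast at this
    linarith
  subst hd
  push_cast [nsmul_eq_mul, Nat.cast_choose_two, Nat.cast_sub hkm, hm₀]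
  ring

theorem special_L_5e_families_general {e k m d m₀ : ℕ} (he : 1 ≤ e) (hk : 2 ≤ k) (hkm : k ≤ m + 1)
    (hd : d = m₀ + m + 1) (hdk : d + e = m * e + k) :
    virtDim d (quasiHom (2 * e) m₀ m) = (k + 2).choose 2 - 1 - 2 * e - (m + 1 - k).choose 2 ∧
      Generically (2 * e + 1) fun p =>
        projDim p d (quasiHom (2 * e) m₀ m) = max (-1) (((k + 2).choose 2 : ℤ) - 1 - 2 * e) ∧
        (projDim p d (quasiHom (2 * e) m₀ m) > max (-1) (virtDim d (quasiHom (2 * e) m₀ m)) ↔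
          k < m ∧ 2 * e < (k + 2).choose 2) := by
  have hv := virtDim_quasiHom hkm hd hdk
  obtain ⟨P, hP, hgen⟩ := generically_finrank_linSys_quasiHom he hk hkm hd hdk
  refine ⟨hv, P, hP, fun p hp hpP => ?_⟩
  have hdim : projDim p d (quasiHom (2 * e) m₀ m) =
      max (-1) (((k + 2).choose 2 : ℤ) - 1 - 2 * e) := by
    rw [projDim, hgen p hp hpP]
    omega
  have hpos : 0 < (m + 1 - k).choose 2 ↔ k < m := by
    rw [Nat.pos_iff_ne_zero, Ne, Nat.choose_eq_zero_iff]
    omega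
  refine ⟨hdim, ?_⟩
  rw [hdim, hv, ← hpos]
  omega

theorem special_qh {e k d m₀ : ℕ} (he : 1 ≤ e) (hk : 2 ≤ k) (hk6 : k < 6)
    (hek : 2 * e < (k + 2).choose 2) (hd : d = 5 * e + k) (hm₀ : d = m₀ + 7) :
    virtDim d (qh (2 * e) m₀) = -2 * (e : ℤ) + ((k + 2).choose 2 - 1 - (7 - k).choose 2) ∧
      Generically (2 * e + 1) fun p =>
        projDim p d (qh (2 * e) m₀) = (k + 2).choose 2 - 1 - 2 * (e : ℤ) ∧
        projDim p d (qh (2 * e) m₀) > max (-1) (virtDim d (qh (2 * e) m₀)) := by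
  obtain ⟨hv, P, hP, hgen⟩ :=
    special_L_5e_families_general (m := 6) he hk (by omega) hm₀ (by omega)
  rw [qh_eq_quasiHom]
  refine ⟨by rw [hv]; ring, P, hP, fun p hp hpP => ?_⟩
  obtain ⟨hdim, hspecial⟩ := hgen p hp hpP
  exact ⟨by omega, hspecial.mpr ⟨hk6, hek⟩⟩

theorem special_L_5e_families :
    (∀ e : ℕ, 1 ≤ e → e ≤ 2 →
      virtDim (5 * e + 2) (qh (2 * e) (5 * e - 5)) = -2 * (e : ℤ) - 5 ∧
      Generically (2 * e + 1) (fun p =>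
        projDim p (5 * e + 2) (qh (2 * e) (5 * e - 5)) = 5 - 2 * (e : ℤ) ∧
        projDim p (5 * e + 2) (qh (2 * e) (5 * e - 5)) >
          max (-1) (virtDim (5 * e + 2) (qh (2 * e) (5 * e - 5))))) ∧
    (∀ e : ℕ, 1 ≤ e → e ≤ 4 →
      virtDim (5 * e + 3) (qh (2 * e) (5 * e - 4)) = -2 * (e : ℤ) + 3 ∧
      Generically (2 * e + 1) (fun p =>
        projDim p (5 * e + 3) (qh (2 * e) (5 * e - 4)) = 9 - 2 * (e : ℤ) ∧
        projDim p (5 * e + 3) (qh (2 * e) (5 * e - 4)) >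
          max (-1) (virtDim (5 * e + 3) (qh (2 * e) (5 * e - 4))))) ∧
    (∀ e : ℕ, 1 ≤ e → e ≤ 7 →
      virtDim (5 * e + 4) (qh (2 * e) (5 * e - 3)) = -2 * (e : ℤ) + 11 ∧
      Generically (2 * e + 1) (fun p =>
        projDim p (5 * e + 4) (qh (2 * e) (5 * e - 3)) = 14 - 2 * (e : ℤ) ∧
        projDim p (5 * e + 4) (qh (2 * e) (5 * e - 3)) >
          max (-1) (virtDim (5 * e + 4) (qh (2 * e) (5 * e - 3))))) ∧
    (∀ e : ℕ, 1 ≤ e → e ≤ 10 →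
      virtDim (5 * e + 5) (qh (2 * e) (5 * e - 2)) = -2 * (e : ℤ) + 19 ∧
      Generically (2 * e + 1) (fun p =>
        projDim p (5 * e + 5) (qh (2 * e) (5 * e - 2)) = 20 - 2 * (e : ℤ) ∧
        projDim p (5 * e + 5) (qh (2 * e) (5 * e - 2)) >
          max (-1) (virtDim (5 * e + 5) (qh (2 * e) (5 * e - 2))))) := by
  refine ⟨fun e he h => ?_, fun e he h => ?_, fun e he h => ?_, fun e he h => ?_⟩
  · exact special_qh (k := 2) he (by simp) (by simp) (show 2 * e < 6 by omega) rfl (by omega)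
  · exact special_qh (k := 3) he (by simp) (by simp) (show 2 * e < 10 by omega) rfl (by omega)
  · exact special_qh (k := 4) he (by simp) (by simp) (show 2 * e < 15 by omega) rfl (by omega)
  · exact special_qh (k := 5) he (by simp) (by simp) (show 2 * e < 21 by omega) rfl (by omega)
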